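/- A Poisson prime ideal P of A is Poisson primitive if and only if either (i) P is a maximal ideal of A that is a Poisson ideal, or (ii) P is a proper Poisson prime ideal (not residually null) and there exist (λ_1,μ_1),…,(λ_{n−2},μ_{n−2}) ∈ ℂ²∖{(0,0)} such that the ideal (λ_1 s_1 − μ_1 t_1)A + ⋯ + (λ_{n−2} s_{n−2} − μ_{n−2} t_{n−2})A is a proper ideal of A and P is a minimal prime ideal over it. -/

import Mathlib

/- STATEMENT 17: A Poisson prime ideal P of A is Poisson primitive iff either
(i) P is a Poisson maximal ideal, or (ii) P is proper (not residually null) and is a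
minimal prime over a proper ideal (λ_1s_1−μ_1t_1)A + ⋯ + (λ_{n−2}s_{n−2}−μ_{n−2}t_{n−2})A
with each (λ_i,μ_i) ≠ (0,0). -/

noncomputable section
open MvPolynomial

/-- The polynomial algebra `A = ℂ[x_1,…,x_{m+2}]`. -/
abbrev PA (m : ℕ) : Type := MvPolynomial (Fin (m + 2)) ℂ

/-- The rational function field `B = ℂ(x_1,…,x_{m+2})`. -/
abbrev FB (m : ℕ) : Type := FractionRing (PA m)

/-- The rows of the matrix computing the Poisson bracket on `A`: ∇f, ∇g and, for
each `i`, `t_i²∇(s_i/t_i) = t_i∇s_i − s_i∇t_i`. -/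
def pbrRows {m : ℕ} (s t : Fin m → PA m) (f g : PA m) :
    Fin (m + 2) → Fin (m + 2) → PA m :=
  Fin.cons (fun j => pderiv j f)
    (Fin.cons (fun j => pderiv j g)
      (fun k => fun j => t k * pderiv j (s k) - s k * pderiv j (t k)))

/-- The Poisson bracket `{f,g} = (t_1⋯t_m)²·Jac(f,g,s_1/t_1,…,s_m/t_m)` restricted to
the polynomial algebra `A`. -/
def pbr {m : ℕ} (s t : Fin m → PA m) (f g : PA m) : PA m :=
  Matrix.det (Matrix.of (pbrRows s t f g))

/-!
If a prime Poisson ideal `P` misses some bracket `{f, g}`, the Hamiltonian derivations of `f` and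
`g` act on the quotient by `P`, and applying them to a relation of minimal degree shows that `f`
and `g` are algebraically independent modulo `P`. On the other hand, if a prime `Q` contains all the
`λ_i s_i - μ_i t_i` and misses `{f, g}`, then the Jacobian criterion makes the quotient by `Q`
algebraic over the subalgebra generated by `f` and `g`. Hence no such `Q` lies strictly below `P`.

By the Nullstellensatz every maximal ideal contains some `λ_i s_i - μ_i t_i` for each `i`. These
elements generate Poisson ideals, so they lie in `P` when `P` is Poisson primitive, and `P` is
minimal over them. Conversely, choose a maximal ideal `M` above `P` that misses `{f, g}`. For a
Poisson ideal `J` inside `M`, a prime inside `M` minimal over `J + P` is Poisson, since in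
characteristic zero derivations preserve minimal primes; it is therefore equal to `P`, so `J ≤ P`.
-/

section Derivations

variable {k R : Type*} [CommRing k] [CommRing R] [Algebra k R]

lemma exists_mul_pow_mem_of_mem_minimalPrimes {J Q : Ideal R} (hQ : Q ∈ J.minimalPrimes) {x : R}
    (hx : x ∈ Q) : ∃ n : ℕ, ∃ y ∉ Q, y * x ^ n ∈ J := by
  have : Q.IsPrime := hQ.isPrime
  have hrad : algebraMap R (Localization.AtPrime Q) x ∈
      (J.map (algebraMap R (Localization.AtPrime Q))).radical := by
    rw [IsLocalization.AtPrime.radical_map_of_mem_minimalPrimes _ Q J hQ]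
    exact Ideal.mem_map_of_mem _ hx
  obtain ⟨n, hn⟩ := hrad
  rw [← map_pow, IsLocalization.algebraMap_mem_map_algebraMap_iff Q.primeCompl] at hn
  obtain ⟨y, hy, hyJ⟩ := hn
  exact ⟨n, y, hy, hyJ⟩

lemma mul_pow_notMem_of_derivation_notMem [Algebra ℚ R] (D : Derivation k R R) {J Q : Ideal R}
    [Q.IsPrime] (hJQ : J ≤ Q) (hJ : ∀ u ∈ J, D u ∈ J) {x : R} (hDx : D x ∉ Q) (n : ℕ) :
    ∀ y ∉ Q, y * x ^ n ∉ J := by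
  induction n with
  | zero => exact fun y hy h => hy (hJQ (by simpa using h))
  | succ n ih =>
    intro y hy h
    have hn : ((n : R) + 1) ∉ Q := fun hn => Ideal.IsPrime.ne_top ‹_› <|
      Q.eq_top_of_isUnit_mem hn <| by
        simpa using (Nat.cast_add_one_ne_zero (R := ℚ) n).isUnit.map (algebraMap ℚ R)
    -- Multiplying `D (y x^(n+1))` by `y` lets the term containing `D y` be cancelled modulo `J`.
    have hDy : (n + 1) * y * y * D x * x ^ n =
        y * D (y * x ^ (n + 1)) - D y * (y * x ^ (n + 1)) := by
      simp only [Derivation.leibniz, Derivation.leibniz_pow, smul_eq_mul, nsmul_eq_mul,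
        Nat.add_sub_cancel]
      push_cast
      ring
    refine ih ((n + 1) * y * y * D x) ?_ ?_
    · simp only [Ideal.IsPrime.mul_mem_iff_mem_or_mem, not_or]
      exact ⟨⟨⟨hn, hy⟩, hy⟩, hDx⟩
    · rw [hDy]
      exact J.sub_mem (J.mul_mem_left _ (hJ _ h)) (J.mul_mem_left _ h)

theorem derivation_mem_of_mem_minimalPrimes [Algebra ℚ R] (D : Derivation k R R) {J Q : Ideal R}
    (hQ : Q ∈ J.minimalPrimes) (hJ : ∀ u ∈ J, D u ∈ J) : ∀ u ∈ Q, D u ∈ Q := by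
  intro x hx
  by_contra hDx
  have : Q.IsPrime := hQ.isPrime
  obtain ⟨n, y, hy, hyJ⟩ := exists_mul_pow_mem_of_mem_minimalPrimes hQ hx
  exact mul_pow_notMem_of_derivation_notMem D hQ.le hJ hDx n y hy hyJ

lemma derivation_algHom_eq_sum_pderiv {M σ : Type*} [AddCommGroup M] [Module R M] [Module k M]
    [Fintype σ] (D : Derivation k R M) (φ : MvPolynomial σ k →ₐ[k] R)
    (F : MvPolynomial σ k) : D (φ F) = ∑ i, φ (pderiv i F) • D (φ (X i)) := by
  classical
  induction F using MvPolynomial.induction_on with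
  | C a => simp [← algebraMap_eq]
  | add p q hp hq => simp [hp, hq, add_smul, Finset.sum_add_distrib]
  | mul_X p j hp =>
    simp [hp, add_smul, Finset.sum_add_distrib, Finset.smul_sum, mul_smul, pderiv_X,
      Pi.single_apply, apply_ite φ, ite_smul]

section Pencil

variable {M : Type*} [AddCommGroup M] [Module R M] [Module k M] [IsScalarTower k R M]
  (D : Derivation k R M) (a b : R) (l u : k)

lemma smul_smul_derivation_sub_left :
    l • (b • D a - a • D b) = b • D (l • a - u • b) - (l • a - u • b) • D b := by
  simp only [map_sub, Derivation.map_smul, smul_sub, sub_smul, smul_assoc, smul_comm b l,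
    smul_comm b u]
  abel

lemma smul_smul_derivation_sub_right :
    u • (b • D a - a • D b) = a • D (l • a - u • b) - (l • a - u • b) • D a := by
  simp only [map_sub, Derivation.map_smul, smul_sub, sub_smul, smul_assoc, smul_comm a l,
    smul_comm a u]
  abel

end Pencil

lemma smul_derivation_sub_eq_zero {K M : Type*} [Field K] [Algebra K R] [AddCommGroup M]
    [Module R M] [Module K M] [IsScalarTower K R M] (D : Derivation K R M) {a b : R} {l u : K}
    (hlu : (l, u) ≠ (0, 0)) (hab : l • a - u • b = 0) : b • D a - a • D b = 0 := by
  have hl : l • (b • D a - a • D b) = 0 := by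
    rw [smul_smul_derivation_sub_left D a b l u, hab, map_zero, smul_zero, zero_smul, sub_zero]
  have hu : u • (b • D a - a • D b) = 0 := by
    rw [smul_smul_derivation_sub_right D a b l u, hab, map_zero, smul_zero, zero_smul, sub_zero]
  by_contra hne
  exact hlu (Prod.ext ((smul_eq_zero_iff_left hne).1 hl) ((smul_eq_zero_iff_left hne).1 hu))

end Derivations

section AlgebraicIndependence

lemma eq_C_of_pderiv_eq_zero {R σ : Type*} [CommSemiring R] [NoZeroDivisors R] [CharZero R]
    {F : MvPolynomial σ R} (hF : ∀ i, pderiv i F = 0) : F = C (coeff 0 F) := by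
  classical
  ext m
  rw [coeff_C]
  split_ifs with hm
  · rw [hm]
  obtain ⟨i, hi⟩ := Finsupp.ne_iff.1 (Ne.symm hm)
  have hle : Finsupp.single i 1 ≤ m := Finsupp.single_le_iff.2 (Nat.one_le_iff_ne_zero.2 hi)
  have hcoeff := coeff_pderiv (i := i) F (m - Finsupp.single i 1)
  rw [hF i, coeff_zero, tsub_add_cancel_of_le hle] at hcoeff
  exact (mul_eq_zero.1 hcoeff.symm).resolve_right (Nat.cast_add_one_ne_zero _)

lemma totalDegree_pderiv_lt {R σ : Type*} [CommSemiring R] {F : MvPolynomial σ R} {i : σ}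
    (hF : pderiv i F ≠ 0) : (pderiv i F).totalDegree < F.totalDegree := by
  have hlt : ∀ m ∈ (pderiv i F).support, (m.sum fun _ e => e) < F.totalDegree := by
    intro m hm
    rw [mem_support_iff, coeff_pderiv] at hm
    have hle := le_totalDegree (mem_support_iff.2 (left_ne_zero_of_mul hm))
    rw [Finsupp.sum_add_index' (by simp) (by simp)] at hle
    exact Nat.lt_of_succ_le (by simpa using hle)
  obtain ⟨m, hm⟩ := support_nonempty.2 hF
  exact (Finset.sup_lt_iff (Nat.zero_lt_of_lt (hlt m hm))).2 hlt

theorem eq_bot_or_eq_top_of_pderiv_mem {K σ : Type*} [Field K] [CharZero K]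
    {I : Ideal (MvPolynomial σ K)} (hI : ∀ i, ∀ F ∈ I, pderiv i F ∈ I) : I = ⊥ ∨ I = ⊤ := by
  by_contra! h
  obtain ⟨hbot, htop⟩ := h
  have hzero : ∀ d, ∀ F ∈ I, F.totalDegree = d → F = 0 := by
    intro d
    induction d using Nat.strong_induction_on with
    | _ d ih =>
      rintro F hF rfl
      have hpderiv : ∀ i, pderiv i F = 0 := fun i => by
        by_contra hne
        exact hne (ih _ (totalDegree_pderiv_lt hne) _ (hI i F hF) rfl)
      have hconst := eq_C_of_pderiv_eq_zero hpderiv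
      by_contra hne
      have hcoeff : coeff 0 F ≠ 0 := fun h0 => hne (by rw [hconst, h0, C_0])
      rw [hconst] at hF
      exact htop (I.eq_top_of_isUnit_mem hF (hcoeff.isUnit.map C))
  exact hbot ((Submodule.eq_bot_iff I).2 fun F hF => hzero _ F hF rfl)

theorem algebraicIndependent_mk_of_derivation {K R σ : Type*} [Field K] [CharZero K] [CommRing R]
    [Algebra K R] [Finite σ] {P : Ideal R} [P.IsPrime] {v : σ → R} (D : σ → Derivation K R R)
    (hD : ∀ i, ∀ u ∈ P, D i u ∈ P) (hdiag : ∀ i, D i (v i) ∉ P)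
    (hoff : ∀ i j, i ≠ j → D i (v j) ∈ P) :
    AlgebraicIndependent K fun i => Ideal.Quotient.mkₐ K P (v i) := by
  classical
  cases nonempty_fintype σ
  let relations : Ideal (MvPolynomial σ K) := P.comap (aeval v)
  have hpderiv : ∀ i, ∀ F ∈ relations, pderiv i F ∈ relations := by
    intro i F hF
    have hsum : ∑ j, aeval v (pderiv j F) * D i (v j) ∈ P := by
      simpa [derivation_algHom_eq_sum_pderiv] using hD i _ hF
    have hrest : ∑ j ∈ {i}ᶜ, aeval v (pderiv j F) * D i (v j) ∈ P :=
      P.sum_mem fun j hj => P.mul_mem_left _ (hoff i j (by simpa [eq_comm] using hj))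
    rw [Fintype.sum_eq_add_sum_compl i] at hsum
    exact (Ideal.IsPrime.mem_or_mem ‹_› ((P.add_mem_iff_left hrest).1 hsum)).resolve_right (hdiag i)
  have hproper : relations ≠ ⊤ := Ideal.comap_ne_top _ (Ideal.IsPrime.ne_top ‹_›)
  have hbot := (eq_bot_or_eq_top_of_pderiv_mem hpderiv).resolve_right hproper
  refine algebraicIndependent_iff.2 fun F hF => ?_
  rw [← Ideal.mem_bot, ← hbot, Ideal.mem_comap, ← Ideal.Quotient.eq_zero_iff_mem]
  rwa [← comp_aeval_apply] at hF

theorem eq_of_le_of_isAlgebraic_of_algebraicIndependent {K R ι : Type*} [CommRing K] [CommRing R]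
    [Algebra K R] {P Q : Ideal R} [Q.IsPrime] (hQP : Q ≤ P) {v : ι → R}
    (halg : Algebra.IsAlgebraic
      (Algebra.adjoin K (Set.range fun i => Ideal.Quotient.mkₐ K Q (v i))) (R ⧸ Q))
    (hind : AlgebraicIndependent K fun i => Ideal.Quotient.mkₐ K P (v i)) : Q = P := by
  refine le_antisymm hQP fun u hu => ?_
  by_contra huQ
  have hu0 : Ideal.Quotient.mkₐ K Q u ≠ 0 := fun h => huQ (Ideal.Quotient.eq_zero_iff_mem.1 h)
  obtain ⟨⟨r, hr⟩, hr0, c, hrc⟩ :=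
    (halg.isAlgebraic _).exists_nonzero_dvd (mem_nonZeroDivisors_of_ne_zero hu0)
  obtain ⟨b, rfl⟩ := Ideal.Quotient.mkₐ_surjective K Q c
  obtain ⟨F, rfl⟩ :
      ∃ F : MvPolynomial ι K, aeval (fun i => Ideal.Quotient.mkₐ K Q (v i)) F = r := by
    rwa [Algebra.adjoin_range_eq_range_aeval] at hr
  have hFQ : aeval v F - u * b ∈ Q := by
    rw [← Ideal.Quotient.mk_eq_mk_iff_sub_mem]
    change Ideal.Quotient.mkₐ K Q _ = Ideal.Quotient.mkₐ K Q _
    rw [comp_aeval_apply, map_mul]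
    exact hrc
  have hFP : aeval v F ∈ P := (P.sub_mem_iff_left (P.mul_mem_right b hu)).1 (hQP hFQ)
  have hF : F = 0 := by
    refine algebraicIndependent_iff.1 hind F ?_
    rw [← comp_aeval_apply]
    exact Ideal.Quotient.eq_zero_iff_mem.2 hFP
  exact hr0 (Subtype.ext (by simp [hF]))

end AlgebraicIndependence

section JacobianCriterion

lemma det_smul_eq_zero_of_sum_smul_eq_zero {n R M : Type*} [Fintype n] [DecidableEq n] [CommRing R]
    [AddCommGroup M] [Module R M] {A : Matrix n n R} {v : n → M}
    (h : ∀ i, ∑ j, A i j • v j = 0) (j : n) : A.det • v j = 0 := by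
  calc A.det • v j = ∑ k, (A.adjugate * A) j k • v k := by
        simp [Matrix.adjugate_mul, Matrix.one_apply]
    _ = ∑ i, A.adjugate j i • ∑ k, A i k • v k := by
        simp only [Matrix.mul_apply, Finset.sum_smul, Finset.smul_sum, mul_smul]
        exact Finset.sum_comm
    _ = 0 := by simp only [h, smul_zero, Finset.sum_const_zero]

variable {R B : Type*} [CommRing R] [CommRing B] [IsDomain R] [IsDomain B] [Algebra R B]
  [FaithfulSMul R B]

theorem isAlgebraic_of_smul_kaehlerDifferential_eq_zero [Algebra.EssFiniteType R B] {d : B}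
    (hd : d ≠ 0) (h : ∀ b, d • KaehlerDifferential.D R B b = 0) : Algebra.IsAlgebraic R B := by
  let L := FractionRing R
  let K := FractionRing B
  have hDB : ∀ b, KaehlerDifferential.D R K (algebraMap B K b) = 0 := fun b => by
    have hdb := congrArg (KaehlerDifferential.map R R B K) (h b)
    rw [map_smul, KaehlerDifferential.map_D, map_zero, ← algebraMap_smul K] at hdb
    exact (smul_eq_zero.1 hdb).resolve_left (by simpa [K] using hd)
  have hunram : Algebra.FormallyUnramified R K := by
    refine ⟨?_⟩
    rw [← Submodule.subsingleton_iff K, ← subsingleton_iff_bot_eq_top,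
      ← KaehlerDifferential.span_range_derivation, eq_comm, Submodule.span_eq_bot]
    rintro _ ⟨x, rfl⟩
    obtain ⟨a, b, -, rfl⟩ := IsFractionRing.div_surjective (A := B) x
    rw [Derivation.leibniz_div, hDB, hDB, smul_zero, smul_zero, sub_zero, smul_zero]
  let _ : Algebra L K := FractionRing.liftAlgebra R K
  have : IsScalarTower R L K := FractionRing.isScalarTower_liftAlgebra R K
  have : Algebra.FormallyUnramified L K := .of_restrictScalars R L K
  have : Algebra.EssFiniteType B K := .of_isLocalization K (nonZeroDivisors B)
  have : Algebra.EssFiniteType R K := .comp R B K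
  have : Algebra.EssFiniteType L K := .of_comp R L K
  have : Algebra.IsSeparable L K := Algebra.FormallyUnramified.isSeparable L K
  have : Algebra.IsAlgebraic R K :=
    (IsFractionRing.comap_isAlgebraic_iff (A := R) (K := L)).2 inferInstance
  exact (IsFractionRing.isAlgebraic_iff' R B K).2 this

theorem isAlgebraic_of_det_ne_zero {n : Type*} [Fintype n] [DecidableEq n] {x : n → B}
    (hx : Algebra.adjoin R (Set.range x) = ⊤) {A : Matrix n n B} (hA : A.det ≠ 0)
    (h : ∀ i, ∑ j, A i j • KaehlerDifferential.D R B (x j) = 0) : Algebra.IsAlgebraic R B := by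
  have : Algebra.FiniteType R B := ⟨hx ▸ Subalgebra.fg_def.2 ⟨_, Set.finite_range x, rfl⟩⟩
  refine isAlgebraic_of_smul_kaehlerDifferential_eq_zero hA fun b => ?_
  have hgen : Set.EqOn (A.det • KaehlerDifferential.D R B) 0 (Set.range x) := by
    rintro _ ⟨j, rfl⟩
    exact det_smul_eq_zero_of_sum_smul_eq_zero h j
  exact Derivation.eqOn_adjoin (D2 := 0) hgen (hx ▸ Algebra.mem_top)

end JacobianCriterion

section MaximalIdeals

lemma exists_isMaximal_notMem {R : Type*} [CommRing R] [IsJacobsonRing R] {I : Ideal R}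
    (hI : I.IsRadical) {x : R} (hx : x ∉ I) : ∃ M : Ideal R, M.IsMaximal ∧ I ≤ M ∧ x ∉ M := by
  rw [← IsJacobsonRing.out ‹_› hI, Ideal.jacobson, Ideal.mem_sInf] at hx
  simpa only [Set.mem_ofPred_eq, not_forall, exists_prop, and_assoc, and_left_comm] using hx

lemma exists_pencil_mem_of_isMaximal {K σ : Type*} [Field K] [IsAlgClosed K] [Finite σ]
    {M : Ideal (MvPolynomial σ K)} (hM : M.IsMaximal) (a b : MvPolynomial σ K) :
    ∃ l u : K, (l, u) ≠ (0, 0) ∧ C l * a - C u * b ∈ M := by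
  obtain ⟨p, rfl⟩ := isMaximal_iff_eq_vanishingIdeal_singleton.1 hM
  simp only [mem_vanishingIdeal_singleton_iff, map_sub, map_mul, algHom_C,
    Algebra.algebraMap_self_apply]
  by_cases h : (aeval p b, aeval p a) = ((0 : K), (0 : K))
  · exact ⟨1, 0, by simp, by simp [(Prod.mk.inj h).2]⟩
  · exact ⟨aeval p b, aeval p a, h, by ring⟩

end MaximalIdeals

section Bracket

lemma dvd_smul_det_of_smul_row_eq {k n R : Type*} [Fintype n] [DecidableEq n] [CommSemiring k]
    [CommRing R] [Algebra k R] {A : Matrix n n R} {i j : n} (hij : i ≠ j) {l : k} {c x : R}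
    {w : n → R} (h : l • A j = c • A i + x • w) : x ∣ l • A.det := by
  have hdet : l • A.det = x * (A.updateRow j w).det := by
    calc l • A.det = (A.updateRow j (l • A j)).det := by
          rw [← algebraMap_smul R l (A j), Matrix.det_updateRow_smul, Matrix.updateRow_eq_self,
            Algebra.smul_def]
      _ = x * (A.updateRow j w).det := by
          rw [h, Matrix.det_updateRow_add, Matrix.det_updateRow_smul, Matrix.det_updateRow_smul,
            Matrix.det_updateRow_eq_zero hij, mul_zero, zero_add]
  exact ⟨_, hdet⟩

lemma dvd_of_dvd_smul {K R : Type*} [Field K] [CommRing R] [Algebra K R] {l : K} (hl : l ≠ 0)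
    {x y : R} (h : x ∣ l • y) : x ∣ y := by
  simpa only [inv_smul_smul₀ hl] using dvd_smul_of_dvd l⁻¹ h

/-- The gradient of a polynomial, as a derivation into the module of coordinate vectors. -/
def polynomialGradient (K σ : Type*) [CommRing K] :
    Derivation K (MvPolynomial σ K) (σ → MvPolynomial σ K) :=
  Derivation.mk' (LinearMap.pi fun j => (pderiv j).toLinearMap) fun F G => by
    ext1 j
    simp

variable {K : Type*} [CommRing K] {m : ℕ} (s t : Fin m → MvPolynomial (Fin (m + 2)) K)
  (f g : MvPolynomial (Fin (m + 2)) K)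

/-- The matrix with rows `∇f`, `∇g` and `t_i ∇s_i - s_i ∇t_i = t_i² ∇(s_i / t_i)`. -/
def jacobianMatrix : Matrix (Fin (m + 2)) (Fin (m + 2)) (MvPolynomial (Fin (m + 2)) K) :=
  Fin.cons (polynomialGradient K _ f) (Fin.cons (polynomialGradient K _ g) fun i =>
    t i • polynomialGradient K _ (s i) - s i • polynomialGradient K _ (t i))

lemma jacobianMatrix_zero : jacobianMatrix s t f g 0 = polynomialGradient K _ f := rfl

lemma jacobianMatrix_one : jacobianMatrix s t f g 1 = polynomialGradient K _ g := rfl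

lemma jacobianMatrix_succ_succ (i : Fin m) :
    jacobianMatrix s t f g i.succ.succ =
      t i • polynomialGradient K _ (s i) - s i • polynomialGradient K _ (t i) := rfl

/-- The bracket `{f, g} = (t_1 ⋯ t_m)² Jac(f, g, s_1/t_1, …, s_m/t_m)`, over any commutative ring
`K`. The denominators are cleared row by row, so no `t_i` is inverted. -/
def jacobianBracket : MvPolynomial (Fin (m + 2)) K :=
  (jacobianMatrix s t f g).det

/-- The Hamiltonian derivation `{·, g}`. -/
def hamiltonian : Derivation K (MvPolynomial (Fin (m + 2)) K) (MvPolynomial (Fin (m + 2)) K) :=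
  (Matrix.detRowAlternating.toMultilinearMap.toLinearMap (jacobianMatrix s t 0 g) 0).compDer
    (polynomialGradient K _)

lemma hamiltonian_apply : hamiltonian s t g f = jacobianBracket s t f g :=
  congrArg Matrix.det (Fin.update_cons_zero _ _ _)

lemma jacobianBracket_self : jacobianBracket s t f f = 0 :=
  Matrix.det_zero_of_row_eq Fin.zero_ne_one <| by rw [jacobianMatrix_zero, jacobianMatrix_one]

lemma jacobianMatrix_swap :
    jacobianMatrix s t g f = (jacobianMatrix s t f g).submatrix (Equiv.swap 0 1) id := by
  have hrow : ∀ i, jacobianMatrix s t g f i = jacobianMatrix s t f g (Equiv.swap 0 1 i) := by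
    refine Fin.cases ?_ (Fin.cases ?_ fun i => ?_)
    · rw [Equiv.swap_apply_left, jacobianMatrix_zero, jacobianMatrix_one]
    · rw [Fin.succ_zero_eq_one, Equiv.swap_apply_right, jacobianMatrix_one, jacobianMatrix_zero]
    · rw [Equiv.swap_apply_of_ne_of_ne (Fin.succ_ne_zero _) (Fin.succ_succ_ne_one i),
        jacobianMatrix_succ_succ, jacobianMatrix_succ_succ]
  exact Matrix.ext fun i j => congrFun (hrow i) j

lemma jacobianBracket_swap : jacobianBracket s t g f = -jacobianBracket s t f g := by
  rw [jacobianBracket, jacobianBracket, jacobianMatrix_swap s t f g, Matrix.det_permute,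
    Equiv.Perm.sign_swap Fin.zero_ne_one, Units.val_neg, Units.val_one, Int.cast_neg, Int.cast_one,
    neg_one_mul]

lemma pencil_dvd_jacobianBracket {K : Type*} [Field K]
    (s t : Fin m → MvPolynomial (Fin (m + 2)) K) (g : MvPolynomial (Fin (m + 2)) K) (i : Fin m)
    {l u : K} (hlu : (l, u) ≠ (0, 0)) :
    C l * s i - C u * t i ∣ jacobianBracket s t (C l * s i - C u * t i) g := by
  rw [← smul_eq_C_mul, ← smul_eq_C_mul]
  have hne : (0 : Fin (m + 2)) ≠ i.succ.succ := (Fin.succ_ne_zero _).symm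
  by_cases hl : l = 0
  · have hu : u ≠ 0 := fun hu => hlu (by rw [hl, hu])
    refine dvd_of_dvd_smul hu (dvd_smul_det_of_smul_row_eq hne (c := s i)
      (w := -polynomialGradient K _ (s i)) ?_)
    rw [jacobianMatrix_zero, jacobianMatrix_succ_succ, smul_smul_derivation_sub_right, smul_neg,
      sub_eq_add_neg]
  · refine dvd_of_dvd_smul hl (dvd_smul_det_of_smul_row_eq hne (c := t i)
      (w := -polynomialGradient K _ (t i)) ?_)
    rw [jacobianMatrix_zero, jacobianMatrix_succ_succ, smul_smul_derivation_sub_left, smul_neg,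
      sub_eq_add_neg]

end Bracket

section PoissonIdeals

variable {K : Type*} [CommRing K] {m : ℕ} (s t : Fin m → MvPolynomial (Fin (m + 2)) K)

/-- Poisson ideals for `jacobianBracket s t`; by skew symmetry one-sided stability suffices. -/
def IsPoissonIdeal (I : Ideal (MvPolynomial (Fin (m + 2)) K)) : Prop :=
  ∀ u ∈ I, ∀ r, jacobianBracket s t u r ∈ I

/-- Residually null ideals: those whose quotient has zero bracket. -/
def IsResiduallyNull (I : Ideal (MvPolynomial (Fin (m + 2)) K)) : Prop :=
  ∀ f g, jacobianBracket s t f g ∈ I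

/-- Poisson primitive ideals: `P` contains every Poisson ideal inside some maximal ideal `M ⊇ P`.
That `P` itself is Poisson is not part of the definition. -/
def IsPoissonPrimitive (P : Ideal (MvPolynomial (Fin (m + 2)) K)) : Prop :=
  ∃ M : Ideal (MvPolynomial (Fin (m + 2)) K), M.IsMaximal ∧ P ≤ M ∧
    ∀ J, IsPoissonIdeal s t J → J ≤ M → J ≤ P

/-- The ideal generated by the polynomials `λ_i s_i - μ_i t_i`. -/
def pencilIdeal (lam mu : Fin m → K) : Ideal (MvPolynomial (Fin (m + 2)) K) :=
  Ideal.span (Set.range fun i => C (lam i) * s i - C (mu i) * t i)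

variable {s t} {I J : Ideal (MvPolynomial (Fin (m + 2)) K)}

lemma pencilIdeal_le_iff {lam mu : Fin m → K} :
    pencilIdeal s t lam mu ≤ I ↔ ∀ i, C (lam i) * s i - C (mu i) * t i ∈ I := by
  rw [pencilIdeal, Ideal.span_le, Set.range_subset_iff]
  rfl

lemma IsPoissonIdeal.sup (hI : IsPoissonIdeal s t I) (hJ : IsPoissonIdeal s t J) :
    IsPoissonIdeal s t (I ⊔ J) := by
  intro u hu r
  obtain ⟨a, ha, b, hb, rfl⟩ := Submodule.mem_sup.1 hu
  rw [← hamiltonian_apply, map_add, hamiltonian_apply, hamiltonian_apply]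
  exact Submodule.add_mem_sup (hI a ha r) (hJ b hb r)

lemma IsPoissonIdeal.of_mem_minimalPrimes [Algebra ℚ K] (hI : IsPoissonIdeal s t I)
    (hJ : J ∈ I.minimalPrimes) : IsPoissonIdeal s t J := fun u hu r => by
  rw [← hamiltonian_apply]
  refine derivation_mem_of_mem_minimalPrimes (hamiltonian s t r) hJ (fun v hv => ?_) u hu
  rw [hamiltonian_apply]
  exact hI v hv r

lemma IsPoissonPrimitive.isMaximal_of_isResiduallyNull (hI : IsPoissonPrimitive s t I)
    (hnull : IsResiduallyNull s t I) : I.IsMaximal := by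
  obtain ⟨M, hM, hIM, hcore⟩ := hI
  have hMI : M ≤ I := hcore M (fun u _ r => hIM (hnull u r)) le_rfl
  rwa [le_antisymm hIM hMI]

end PoissonIdeals

section PoissonPrimes

variable {K : Type*} [Field K] {m : ℕ} {s t : Fin m → MvPolynomial (Fin (m + 2)) K}
  {P Q : Ideal (MvPolynomial (Fin (m + 2)) K)} {f g : MvPolynomial (Fin (m + 2)) K}
  {lam mu : Fin m → K}

lemma isPoissonIdeal_span_pencil (i : Fin m) {l u : K} (hlu : (l, u) ≠ (0, 0)) :
    IsPoissonIdeal s t (Ideal.span {C l * s i - C u * t i}) := by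
  intro v hv r
  obtain ⟨w, rfl⟩ := Ideal.mem_span_singleton'.1 hv
  rw [← hamiltonian_apply, Derivation.leibniz, hamiltonian_apply, hamiltonian_apply]
  refine Ideal.add_mem _ (Ideal.mul_mem_left _ _ ?_)
    (Ideal.mul_mem_right _ _ (Ideal.mem_span_singleton_self _))
  exact Ideal.mem_span_singleton.2 (pencil_dvd_jacobianBracket s t r i hlu)

lemma IsPoissonIdeal.algebraicIndependent_mk [CharZero K] [P.IsPrime] (hP : IsPoissonIdeal s t P)
    (hfg : jacobianBracket s t f g ∉ P) :
    AlgebraicIndependent K fun i => Ideal.Quotient.mkₐ K P (![f, g] i) := by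
  have hgf : jacobianBracket s t g f ∉ P := by rwa [jacobianBracket_swap, neg_mem_iff]
  refine algebraicIndependent_mk_of_derivation ![hamiltonian s t g, hamiltonian s t f] ?_ ?_ ?_
  · simpa [Fin.forall_fin_two, hamiltonian_apply] using
      And.intro (fun u hu => hP u hu g) (fun u hu => hP u hu f)
  · simpa [Fin.forall_fin_two, hamiltonian_apply] using And.intro hfg hgf
  · simp [Fin.forall_fin_two, hamiltonian_apply, jacobianBracket_self]

lemma sum_map_jacobianMatrix_smul_eq_zero {B M : Type*} [CommRing B] [Algebra K B]
    [AddCommGroup M] [Module B M] [Module K M] [IsScalarTower K B M] (D : Derivation K B M)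
    (φ : MvPolynomial (Fin (m + 2)) K →ₐ[K] B) (hlm : ∀ i, (lam i, mu i) ≠ (0, 0))
    (hpencil : ∀ i, φ (C (lam i) * s i - C (mu i) * t i) = 0) (hf : D (φ f) = 0)
    (hg : D (φ g) = 0) (i : Fin (m + 2)) :
    ∑ j, φ (jacobianMatrix s t f g i j) • D (φ (X j)) = 0 := by
  have hgrad : ∀ F, ∑ j, φ (polynomialGradient K _ F j) • D (φ (X j)) = D (φ F) := fun F =>
    (derivation_algHom_eq_sum_pderiv D φ F).symm
  refine Fin.cases ((hgrad f).trans hf) (Fin.cases ((hgrad g).trans hg) fun k => ?_) i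
  simp only [jacobianMatrix_succ_succ, Pi.sub_apply, Pi.smul_apply, smul_eq_mul, map_sub, map_mul,
    sub_smul, mul_smul, Finset.sum_sub_distrib, ← Finset.smul_sum, hgrad]
  refine smul_derivation_sub_eq_zero D (hlm k) ?_
  rw [← map_smul, ← map_smul, ← map_sub, smul_eq_C_mul, smul_eq_C_mul, hpencil]

lemma isAlgebraic_quotient_of_pencilIdeal_le [Q.IsPrime] (hpencil : pencilIdeal s t lam mu ≤ Q)
    (hlm : ∀ i, (lam i, mu i) ≠ (0, 0)) (hfg : jacobianBracket s t f g ∉ Q) :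
    Algebra.IsAlgebraic
      (Algebra.adjoin K (Set.range fun i => Ideal.Quotient.mkₐ K Q (![f, g] i)))
      (MvPolynomial (Fin (m + 2)) K ⧸ Q) := by
  set S := Set.range fun i => Ideal.Quotient.mkₐ K Q (![f, g] i)
  let R := Algebra.adjoin K S
  have hgen : Algebra.adjoin R (Set.range fun j => Ideal.Quotient.mkₐ K Q (X j)) = ⊤ := by
    have hK : Algebra.adjoin K (Set.range fun j => Ideal.Quotient.mkₐ K Q (X j)) = ⊤ := by
      rw [Set.range_comp' (Ideal.Quotient.mkₐ K Q) X, ← AlgHom.map_adjoin, adjoin_range_X,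
        Algebra.map_top, AlgHom.range_eq_top]
      exact Ideal.Quotient.mkₐ_surjective K Q
    rw [← Algebra.adjoin_adjoin_of_tower K, hK, Algebra.coe_top, Algebra.adjoin_univ]
  have hdet : ((jacobianMatrix s t f g).map (Ideal.Quotient.mkₐ K Q)).det ≠ 0 := by
    rw [← AlgHom.mapMatrix_apply, ← AlgHom.map_det]
    exact fun h => hfg (Ideal.Quotient.eq_zero_iff_mem.1 h)
  let D := (KaehlerDifferential.D R (MvPolynomial (Fin (m + 2)) K ⧸ Q)).restrictScalars K
  have hD : ∀ i, D (Ideal.Quotient.mkₐ K Q (![f, g] i)) = 0 := fun i =>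
    (KaehlerDifferential.D R _).map_algebraMap ⟨_, Algebra.subset_adjoin ⟨i, rfl⟩⟩
  have hpencil_zero : ∀ i, Ideal.Quotient.mkₐ K Q (C (lam i) * s i - C (mu i) * t i) = 0 :=
    fun i => Ideal.Quotient.eq_zero_iff_mem.2 (pencilIdeal_le_iff.1 hpencil i)
  have hrow : ∀ i, ∑ j, Ideal.Quotient.mkₐ K Q (jacobianMatrix s t f g i j) •
      D (Ideal.Quotient.mkₐ K Q (X j)) = 0 :=
    sum_map_jacobianMatrix_smul_eq_zero D _ hlm hpencil_zero (hD 0) (hD 1)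
  exact isAlgebraic_of_det_ne_zero hgen hdet hrow

theorem IsPoissonIdeal.eq_of_pencilIdeal_le [CharZero K] [P.IsPrime] [Q.IsPrime]
    (hP : IsPoissonIdeal s t P) (hfg : jacobianBracket s t f g ∉ P) (hQP : Q ≤ P)
    (hpencil : pencilIdeal s t lam mu ≤ Q) (hlm : ∀ i, (lam i, mu i) ≠ (0, 0)) : Q = P :=
  eq_of_le_of_isAlgebraic_of_algebraicIndependent hQP
    (isAlgebraic_quotient_of_pencilIdeal_le hpencil hlm fun h => hfg (hQP h))
    (hP.algebraicIndependent_mk hfg)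

lemma IsPoissonPrimitive.exists_pencilIdeal_le [IsAlgClosed K] (hP : IsPoissonPrimitive s t P) :
    ∃ lam mu : Fin m → K, (∀ i, (lam i, mu i) ≠ (0, 0)) ∧ pencilIdeal s t lam mu ≤ P := by
  obtain ⟨M, hM, -, hcore⟩ := hP
  choose lam mu hlm hmem using fun i => exists_pencil_mem_of_isMaximal hM (s i) (t i)
  refine ⟨lam, mu, hlm, pencilIdeal_le_iff.2 fun i => ?_⟩
  exact hcore _ (isPoissonIdeal_span_pencil i (hlm i))
    ((Ideal.span_singleton_le_iff_mem M).2 (hmem i)) (Ideal.mem_span_singleton_self _)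

lemma IsPoissonIdeal.isPoissonPrimitive_of_pencilIdeal_le [CharZero K] [P.IsPrime]
    (hP : IsPoissonIdeal s t P) (hfg : jacobianBracket s t f g ∉ P)
    (hpencil : pencilIdeal s t lam mu ≤ P) (hlm : ∀ i, (lam i, mu i) ≠ (0, 0)) :
    IsPoissonPrimitive s t P := by
  obtain ⟨M, hM, hPM, hfgM⟩ := exists_isMaximal_notMem (Ideal.IsPrime.isRadical ‹P.IsPrime›) hfg
  refine ⟨M, hM, hPM, fun J hJ hJM => ?_⟩
  have : M.IsPrime := hM.isPrime
  obtain ⟨Q, hQ, hQM⟩ := Ideal.exists_minimalPrimes_le (sup_le hJM hPM)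
  have : Q.IsPrime := hQ.isPrime
  have hPQ : P = Q := ((hJ.sup hP).of_mem_minimalPrimes hQ).eq_of_pencilIdeal_le
    (fun h => hfgM (hQM h)) (le_sup_right.trans hQ.le) hpencil hlm
  exact hPQ ▸ le_sup_left.trans hQ.le

end PoissonPrimes

theorem statement_17_general {K : Type*} [Field K] [IsAlgClosed K] [CharZero K] {m : ℕ}
    (s t : Fin m → MvPolynomial (Fin (m + 2)) K) (P : Ideal (MvPolynomial (Fin (m + 2)) K))
    (hPprime : P.IsPrime) (hPpoisson : IsPoissonIdeal s t P) :
    IsPoissonPrimitive s t P ↔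
      (P.IsMaximal ∨ (¬ IsResiduallyNull s t P ∧
        ∃ lam mu : Fin m → K, (∀ i, (lam i, mu i) ≠ (0, 0)) ∧
          pencilIdeal s t lam mu ≠ ⊤ ∧ P ∈ (pencilIdeal s t lam mu).minimalPrimes)) := by
  constructor
  · intro hP
    refine or_iff_not_imp_left.2 fun hmax => ?_
    have hnull : ¬ IsResiduallyNull s t P := mt hP.isMaximal_of_isResiduallyNull hmax
    obtain ⟨lam, mu, hlm, hpencil⟩ := hP.exists_pencilIdeal_le
    obtain ⟨f, g, hfg⟩ : ∃ f g, jacobianBracket s t f g ∉ P := by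
      simpa only [IsResiduallyNull, not_forall] using hnull
    refine ⟨hnull, lam, mu, hlm, ne_top_of_le_ne_top hPprime.ne_top hpencil,
      ⟨hPprime, hpencil⟩, fun Q ⟨hQ, hQpencil⟩ hQP => ?_⟩
    exact (hPpoisson.eq_of_pencilIdeal_le hfg hQP hQpencil hlm).ge
  · rintro (hmax | ⟨hnull, lam, mu, hlm, -, hmin⟩)
    · exact ⟨P, hmax, le_rfl, fun _ _ hJ => hJ⟩
    · obtain ⟨f, g, hfg⟩ : ∃ f g, jacobianBracket s t f g ∉ P := by
        simpa only [IsResiduallyNull, not_forall] using hnull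
      exact hPpoisson.isPoissonPrimitive_of_pencilIdeal_le hfg hmin.le hlm

theorem statement_17 {m : ℕ} (hm : 1 ≤ m)
    (s t : Fin m → PA m)
    (ht : ∀ i, t i ≠ 0)
    (hcop : ∀ i, ∀ d : PA m, d ∣ s i → d ∣ t i → IsUnit d)
    (hind : AlgebraicIndependent ℂ
      (fun i => algebraMap (PA m) (FB m) (s i) / algebraMap (PA m) (FB m) (t i)))
    (P : Ideal (PA m)) (hPprime : P.IsPrime)
    (hPpoisson : ∀ u ∈ P, ∀ r : PA m, pbr s t u r ∈ P) :
    -- P is Poisson primitive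
    (∃ M : Ideal (PA m), M.IsMaximal ∧ P ≤ M ∧
        ∀ J : Ideal (PA m), (∀ u ∈ J, ∀ r : PA m, pbr s t u r ∈ J) → J ≤ M → J ≤ P) ↔
      -- iff (i) P is a maximal (hence Poisson maximal) ideal, or
      (P.IsMaximal ∨
      -- (ii) P is proper and is a minimal prime over a proper ideal
      --      (λ_1s_1−μ_1t_1)A + ⋯ + (λ_{n−2}s_{n−2}−μ_{n−2}t_{n−2})A
       ((¬ ∀ f g : PA m, pbr s t f g ∈ P) ∧
        ∃ lam mu : Fin m → ℂ, (∀ i, (lam i, mu i) ≠ (0, 0)) ∧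
          Ideal.span (Set.range fun i => C (lam i) * s i - C (mu i) * t i) ≠ ⊤ ∧
          P ∈ (Ideal.span
            (Set.range fun i => C (lam i) * s i - C (mu i) * t i)).minimalPrimes)) :=
  statement_17_general s t P hPprime hPpoisson

end
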